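/- For every n ∈ ℕ, the number of Kreweras excursions of length 3n satisfies f(3n;0,0) = 4ⁿ·C(3n,n)/((n+1)(2n+1)) (as rational numbers, where C(3n,n) is the binomial coefficient), and f(m;0,0) = 0 whenever m is not divisible by 3; equivalently, F(t;0,0) = Σ_{n≥0} (4ⁿ C(3n,n)/((n+1)(2n+1))) t^{3n}. -/

import Mathlib

/-!
The proof is by guess and verification on the kernel equation. Removing the last step shows that
`f` satisfies a recurrence in `n` (`f_succ`), so it suffices to exhibit a trivariate power series
`Q(x, y; t)` whose coefficients satisfy the same recurrence, i.e. which solves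
`(x y - t (x + y + x² y²)) Q = x y - t x r(x) - t y r(y)` for some `r` (`kernel_coeff`,
`f_eq_coeff`).

Let `T = 1 + 4 t³ T³` and `G = T (3 - T) / 2`. There is an explicit series `r(x)` with `r(0) = G`
and `x r = x + 2 t r - 2 t G + t² x² r²` (`exists_boundary`). Put
`P = (x r(x) - y r(y)) / (x - y)`, a power series; then `Q = P / (1 - t x y P)` solves the kernel
equation, because subtracting the quadratic equations of `r(x)` and `r(y)` makes the kernel
appear as a factor (`exists_kernel`). Hence the excursion series is `Q(0, 0; t) = P(0, 0; t) = G`.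

The coefficients of `T` follow from a linear differential equation of second order
(`ternary_ode`), and those of `G` from `t G' + 3 G = 3 T` (`excursion_coeff`).
-/

noncomputable section

/-- The set of admissible steps for Kreweras walks. -/
def krewerasSteps : Set (ℤ × ℤ) := {(-1, 0), (0, -1), (1, 1)}

/-- The position of the walk `w` after its first `k` steps. -/
def walkPos {n : ℕ} (w : Fin n → ℤ × ℤ) (k : ℕ) : ℤ × ℤ :=
  ∑ m ∈ Finset.univ.filter (fun m : Fin n => (m : ℕ) < k), w m

/-- `w` is a Kreweras walk: every step is admissible and the walk (which starts
at the origin) never leaves the first quadrant. -/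
def IsKrewerasWalk {n : ℕ} (w : Fin n → ℤ × ℤ) : Prop :=
  (∀ m, w m ∈ krewerasSteps) ∧ ∀ k ≤ n, 0 ≤ (walkPos w k).1 ∧ 0 ≤ (walkPos w k).2

/-- The number of Kreweras walks of length `n` ending at `(i, j)`. -/
def f (n : ℕ) (i j : ℤ) : ℕ :=
  Nat.card {w : Fin n → ℤ × ℤ // IsKrewerasWalk w ∧ walkPos w n = (i, j)}

/-! ### Recurrence for Kreweras walks -/

/-- The Kreweras walks of length `n` ending at `p`, as a set: `f n i j` is its cardinality. -/
def walkSet (n : ℕ) (p : ℤ × ℤ) : Set (Fin n → ℤ × ℤ) :=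
  {w | IsKrewerasWalk w ∧ walkPos w n = p}

lemma f_eq_ncard (n : ℕ) (i j : ℤ) : f n i j = (walkSet n (i, j)).ncard := rfl

lemma walkPos_snoc_of_le {n : ℕ} (w : Fin n → ℤ × ℤ) (s : ℤ × ℤ) {k : ℕ} (hk : k ≤ n) :
    walkPos (Fin.snoc w s : Fin (n + 1) → ℤ × ℤ) k = walkPos w k := by
  simp [walkPos, Finset.sum_filter, Fin.sum_univ_castSucc, hk]

lemma walkPos_snoc_last {n : ℕ} (w : Fin n → ℤ × ℤ) (s : ℤ × ℤ) :
    walkPos (Fin.snoc w s : Fin (n + 1) → ℤ × ℤ) (n + 1) = walkPos w n + s := by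
  simp [walkPos, Finset.sum_filter, Fin.sum_univ_castSucc]

lemma isKrewerasWalk_snoc {n : ℕ} (w : Fin n → ℤ × ℤ) (s : ℤ × ℤ) :
    IsKrewerasWalk (Fin.snoc w s : Fin (n + 1) → ℤ × ℤ) ↔
      IsKrewerasWalk w ∧ s ∈ krewerasSteps ∧
        0 ≤ (walkPos w n + s).1 ∧ 0 ≤ (walkPos w n + s).2 := by
  constructor
  · rintro ⟨h1, h2⟩
    refine ⟨⟨fun m => ?_, fun k hk => ?_⟩, ?_, ?_⟩
    · simpa using h1 m.castSucc
    · simpa [walkPos_snoc_of_le w s hk] using h2 k (by omega)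
    · simpa using h1 (Fin.last n)
    · simpa only [walkPos_snoc_last] using h2 (n + 1) le_rfl
  · rintro ⟨⟨h1, h2⟩, h3, h4⟩
    refine ⟨fun m => ?_, fun k hk => ?_⟩
    · induction m using Fin.lastCases with
      | last => simpa using h3
      | cast m => simpa using h1 m
    · rcases Nat.lt_or_ge n k with h | h
      · obtain rfl : k = n + 1 := by omega
        simpa only [walkPos_snoc_last] using h4
      · rw [walkPos_snoc_of_le w s h]
        exact h2 k h

lemma walkSet_zero (i j : ℤ) : walkSet 0 (i, j) = if i = 0 ∧ j = 0 then Set.univ else ∅ := by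
  ext w
  by_cases h : i = 0 ∧ j = 0
  · simp [walkSet, IsKrewerasWalk, walkPos, h, Prod.ext_iff]
  · simp only [walkSet, IsKrewerasWalk, walkPos, h]
    simp [Prod.ext_iff]
    omega

lemma walkSet_eq_empty (n : ℕ) {p : ℤ × ℤ} (h : p.1 < 0 ∨ p.2 < 0) : walkSet n p = ∅ := by
  ext w
  simp only [walkSet, Set.mem_ofPred_eq, Set.mem_empty_iff_false, iff_false]
  rintro ⟨⟨-, h2⟩, rfl⟩
  have := h2 n le_rfl
  omega

/-- A walk of length `n + 1` is a walk of length `n` followed by one of the three steps. -/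
lemma walkSet_succ (n : ℕ) {i j : ℤ} (hi : 0 ≤ i) (hj : 0 ≤ j) :
    walkSet (n + 1) (i, j) =
      (fun w => (Fin.snoc w (-1, 0) : Fin (n + 1) → ℤ × ℤ)) '' walkSet n (i + 1, j) ∪
      ((fun w => (Fin.snoc w (0, -1) : Fin (n + 1) → ℤ × ℤ)) '' walkSet n (i, j + 1) ∪
      (fun w => (Fin.snoc w (1, 1) : Fin (n + 1) → ℤ × ℤ)) '' walkSet n (i - 1, j - 1)) := by
  ext v
  constructor
  · rintro ⟨h1, h2⟩
    rw [← Fin.snoc_init_self v, isKrewerasWalk_snoc] at h1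
    rw [← Fin.snoc_init_self v, walkPos_snoc_last] at h2
    obtain ⟨hw, hs, -⟩ := h1
    have hv := Fin.snoc_init_self v
    rcases hs with hs | hs | hs
    · left
      refine ⟨Fin.init v, ⟨hw, ?_⟩, by simpa only [hs] using hv⟩
      rw [hs] at h2
      simp only [Prod.ext_iff, Prod.fst_add, Prod.snd_add] at h2 ⊢
      omega
    · right; left
      refine ⟨Fin.init v, ⟨hw, ?_⟩, by simpa only [hs] using hv⟩
      rw [hs] at h2
      simp only [Prod.ext_iff, Prod.fst_add, Prod.snd_add] at h2 ⊢
      omega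
    · right; right
      refine ⟨Fin.init v, ⟨hw, ?_⟩, by simpa only [Set.mem_singleton_iff.1 hs] using hv⟩
      rw [Set.mem_singleton_iff.1 hs] at h2
      simp only [Prod.ext_iff, Prod.fst_add, Prod.snd_add] at h2 ⊢
      omega
  · rintro (⟨w, ⟨hw, hp⟩, rfl⟩ | ⟨w, ⟨hw, hp⟩, rfl⟩ | ⟨w, ⟨hw, hp⟩, rfl⟩) <;>
    · simp only [walkSet, Set.mem_ofPred_eq, isKrewerasWalk_snoc, walkPos_snoc_last, hp]
      simp [hw, krewerasSteps, hi, hj]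

lemma walkSet_finite (n : ℕ) : ∀ p : ℤ × ℤ, (walkSet n p).Finite := by
  induction n with
  | zero => exact fun p => Set.toFinite _
  | succ n ih =>
    rintro ⟨i, j⟩
    by_cases h : 0 ≤ i ∧ 0 ≤ j
    · rw [walkSet_succ n h.1 h.2]
      exact ((ih _).image _).union (((ih _).image _).union ((ih _).image _))
    · rw [walkSet_eq_empty _ (by simp only; omega)]
      exact Set.finite_empty

lemma disjoint_snoc_image {n : ℕ} {s s' : ℤ × ℤ} (h : s ≠ s') (A B : Set (Fin n → ℤ × ℤ)) :
    Disjoint ((fun w => (Fin.snoc w s : Fin (n + 1) → ℤ × ℤ)) '' A)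
      ((fun w => (Fin.snoc w s' : Fin (n + 1) → ℤ × ℤ)) '' B) := by
  rw [Set.disjoint_left]
  rintro _ ⟨w, -, rfl⟩ ⟨w', -, h'⟩
  exact h (by simpa using (congrFun h' (Fin.last n)).symm)

lemma snoc_left_injective {n : ℕ} (s : ℤ × ℤ) :
    Function.Injective (fun w => (Fin.snoc w s : Fin (n + 1) → ℤ × ℤ)) := by
  intro w w' h
  simpa using congrArg (Fin.init (α := fun _ => ℤ × ℤ)) h

lemma f_zero (i j : ℤ) : f 0 i j = if i = 0 ∧ j = 0 then 1 else 0 := by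
  rw [f_eq_ncard, walkSet_zero]
  split_ifs <;> simp

lemma f_of_neg (n : ℕ) {i j : ℤ} (h : i < 0 ∨ j < 0) : f n i j = 0 := by
  rw [f_eq_ncard, walkSet_eq_empty n h, Set.ncard_empty]

/-- The recurrence given by removing the last step; `f` vanishes outside the quadrant
(`f_of_neg`), so no case distinction is needed on the right. -/
lemma f_succ (n : ℕ) {i j : ℤ} (hi : 0 ≤ i) (hj : 0 ≤ j) :
    f (n + 1) i j = f n (i + 1) j + f n i (j + 1) + f n (i - 1) (j - 1) := by
  have hfin := walkSet_finite n
  simp only [f_eq_ncard]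
  rw [walkSet_succ n hi hj, Set.ncard_union_eq _ ((hfin _).image _)
      (((hfin _).image _).union ((hfin _).image _)),
    Set.ncard_union_eq (disjoint_snoc_image (by decide) _ _) ((hfin _).image _) ((hfin _).image _),
    Set.ncard_image_of_injective _ (snoc_left_injective _),
    Set.ncard_image_of_injective _ (snoc_left_injective _),
    Set.ncard_image_of_injective _ (snoc_left_injective _), add_assoc]
  rw [Set.disjoint_union_right]
  exact ⟨disjoint_snoc_image (by decide) _ _, disjoint_snoc_image (by decide) _ _⟩

section Series

open PowerSeries

/-! ### The ternary tree series and its coefficients -/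

lemma two_ne : (2 : ℚ⟦X⟧) ≠ 0 := by
  intro h
  have := congrArg (constantCoeff (R := ℚ)) h
  rw [map_ofNat, map_zero] at this
  norm_num at this

/-- An `X`-adically nonexpansive map `F` yields a solution of `T = 1 + X * F T`: the iterates of
the right-hand side starting at `0` converge `X`-adically, and `T` is read off on the diagonal. -/
lemma exists_fixedPoint {R : Type*} [CommRing R] (F : R⟦X⟧ → R⟦X⟧)
    (hF : ∀ n a b, (X : R⟦X⟧) ^ n ∣ a - b → (X : R⟦X⟧) ^ n ∣ F a - F b) :
    ∃ T : R⟦X⟧, T = 1 + X * F T := by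
  let it : ℕ → R⟦X⟧ := fun n => (fun a => 1 + X * F a)^[n] 0
  have hs : ∀ n, it (n + 1) = 1 + X * F (it n) := fun n => Function.iterate_succ_apply' _ _ _
  have hstep : ∀ n, (X : R⟦X⟧) ^ n ∣ it (n + 1) - it n := by
    intro n
    induction n with
    | zero => simp
    | succ n ih =>
      rw [hs (n + 1), hs n, add_sub_add_left_eq_sub, ← mul_sub, pow_succ', ← hs n]
      exact mul_dvd_mul_left _ (hF _ _ _ ih)
  have hle : ∀ n k, (X : R⟦X⟧) ^ n ∣ it (n + k) - it n := by
    intro n k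
    induction k with
    | zero => simp
    | succ k ih =>
      have h := (pow_dvd_pow (X : R⟦X⟧) (Nat.le_add_right n k)).trans (hstep (n + k))
      simpa [← add_assoc] using dvd_add h ih
  refine ⟨mk fun n => coeff n (it (n + 1)), ?_⟩
  set T : R⟦X⟧ := mk fun n => coeff n (it (n + 1)) with hT
  have hTn : ∀ n, (X : R⟦X⟧) ^ n ∣ T - it n := by
    intro n
    rw [X_pow_dvd_iff]
    intro m hm
    obtain ⟨k, rfl⟩ := Nat.exists_eq_add_of_lt hm
    have h := X_pow_dvd_iff.1 (hle (m + 1) k) m (by omega)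
    rw [map_sub, sub_eq_zero] at h
    rw [map_sub, sub_eq_zero, hT, coeff_mk, ← h]
    congr 2
    omega
  ext n
  have h1 := X_pow_dvd_iff.1 (hTn (n + 1)) n (by omega)
  have h2 : (X : R⟦X⟧) ^ (n + 1) ∣ X * F T - X * F (it n) := by
    rw [← mul_sub, pow_succ']
    exact mul_dvd_mul_left _ (hF _ _ _ (hTn n))
  have h3 := X_pow_dvd_iff.1 h2 n (by omega)
  rw [map_sub, sub_eq_zero] at h1 h3
  rw [h1, hs, map_add, map_add, h3]

/-- The ternary tree series in the variable `4 t³`. -/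
lemma exists_ternary : ∃ T : ℚ⟦X⟧, T = 1 + 4 * X ^ 3 * T ^ 3 := by
  obtain ⟨T, hT⟩ := exists_fixedPoint (R := ℚ) (fun T => 4 * X ^ 2 * T ^ 3)
    (fun n a b h => by
      rw [← mul_sub]
      exact (h.trans (sub_dvd_pow_sub_pow a b 3)).mul_left _)
  exact ⟨T, by linear_combination hT⟩

/-- The Catalan series in the variable `c X`. -/
lemma exists_quadratic {R : Type*} [CommRing R] (c : R) : ∃ γ : R⟦X⟧, γ = 1 + C c * X * γ ^ 2 := by
  obtain ⟨T, hT⟩ := exists_fixedPoint (R := R) (fun T => C c * T ^ 2)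
    (fun n a b h => by
      rw [← mul_sub]
      exact (h.trans (sub_dvd_pow_sub_pow a b 2)).mul_left _)
  exact ⟨T, by linear_combination hT⟩

/-- The Euler operator `t d/dt` multiplies the `m`-th coefficient by `m`. -/
lemma coeff_theta (A : ℚ⟦X⟧) (m : ℕ) : coeff m (X * d⁄dX ℚ A) = m * coeff m A := by
  cases m with
  | zero => simp
  | succ m => rw [coeff_succ_X_mul, coeff_derivative]; push_cast; ring

/-- Implicit differentiation of the ternary tree equation: `t T' = 3 T (T - 1) / (3 - 2 T)`. -/
lemma theta_ternary {T : ℚ⟦X⟧} (hT : T = 1 + 4 * X ^ 3 * T ^ 3) :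
    (X * d⁄dX ℚ T) * (3 - 2 * T) = 3 * T * (T - 1) := by
  have h4 : d⁄dX ℚ (4 : ℚ⟦X⟧) = 0 := by
    simpa using (d⁄dX ℚ).map_natCast 4
  have h := congrArg (d⁄dX ℚ) hT
  simp [h4] at h
  linear_combination X * T * h + (- 3 * T + -3 * (X * d⁄dX ℚ T)) * hT

lemma three_sub_ne {T : ℚ⟦X⟧} (hT : T = 1 + 4 * X ^ 3 * T ^ 3) : 3 - 2 * T ≠ 0 := by
  intro h
  have h0 := congrArg (constantCoeff (R := ℚ)) hT
  have h1 := congrArg (constantCoeff (R := ℚ)) h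
  simp [map_ofNat] at h0 h1
  rw [h0] at h1
  norm_num at h1

lemma T_ne {T : ℚ⟦X⟧} (hT : T = 1 + 4 * X ^ 3 * T ^ 3) : T ≠ 0 := by
  rintro rfl
  simp at hT

/-- With `D = t d/dt`, the series `T` satisfies `(4 D² + 6 D) T = 108 t³ (D + 1) (D + 2) T`. Clearing
the denominators `3 - 2 T` and `T³` turns this into a polynomial identity in `T`. -/
lemma ternary_ode {T : ℚ⟦X⟧} (hT : T = 1 + 4 * X ^ 3 * T ^ 3) :
    4 * (X * d⁄dX ℚ (X * d⁄dX ℚ T)) + 6 * (X * d⁄dX ℚ T) =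
      108 * (X ^ 3 * (X * d⁄dX ℚ (X * d⁄dX ℚ T) + 3 * (X * d⁄dX ℚ T) + 2 * T)) := by
  have h := theta_ternary hT
  have h2 : d⁄dX ℚ (2 : ℚ⟦X⟧) = 0 := by
    simpa using (d⁄dX ℚ).map_natCast 2
  have h3 : d⁄dX ℚ (3 : ℚ⟦X⟧) = 0 := by
    simpa using (d⁄dX ℚ).map_natCast 3
  have h' := congrArg (fun A : ℚ⟦X⟧ => X * d⁄dX ℚ A) h
  set s := X * d⁄dX ℚ T with hs
  simp only [Derivation.leibniz, map_sub, h2, h3, smul_eq_mul, Derivation.map_one_eq_zero] at h'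
  have hr : (X * d⁄dX ℚ s) * (3 - 2 * T) = 2 * s ^ 2 + 3 * (2 * T - 1) * s := by
    rw [hs] at h' ⊢
    linear_combination h'
  set r := X * d⁄dX ℚ s
  have hD := three_sub_ne hT
  have hr2 : r * (3 - 2 * T) ^ 3 = 9 * T * (T - 1) * (-2 * T ^ 2 + 6 * T - 3) := by
    linear_combination (3 - 2 * T) ^ 2 * hr +
      (2 * (s * (3 - 2 * T) + 3 * T * (T - 1)) + 3 * (2 * T - 1) * (3 - 2 * T)) * h
  have hT3 : 4 * X ^ 3 * T ^ 3 = T - 1 := by linear_combination -hT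
  refine mul_left_cancel₀ (mul_ne_zero (pow_ne_zero 3 hD) (pow_ne_zero 3 (T_ne hT))) ?_
  linear_combination (4 * T ^ 3 - 108 * X ^ 3 * T ^ 3) * hr2
    + (6 * T ^ 3 - 324 * X ^ 3 * T ^ 3) * (3 - 2 * T) ^ 2 * h - 54 * T ^ 4 * hT3

lemma ternary_coeff_rec {T : ℚ⟦X⟧} (hT : T = 1 + 4 * X ^ 3 * T ^ 3) (m : ℕ) :
    2 * (m : ℚ) * (2 * m + 3) * coeff m T =
      if 3 ≤ m then 108 * (((m - 3 : ℕ) : ℚ) + 1) * (((m - 3 : ℕ) : ℚ) + 2) * coeff (m - 3) T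
      else 0 := by
  have h := congrArg (coeff m) (ternary_ode hT)
  have hn : ∀ (k : ℕ) [k.AtLeastTwo] (A : ℚ⟦X⟧) (m : ℕ),
      coeff m ((OfNat.ofNat k : ℚ⟦X⟧) * A) = (OfNat.ofNat k : ℚ) * coeff m A := by
    intro k _ A m
    rw [← map_ofNat (C (R := ℚ)) k, coeff_C_mul]
  simp only [map_add, hn, coeff_theta, coeff_X_pow_mul'] at h
  split_ifs at h ⊢ with h3 <;> linear_combination h

lemma ternary_coeff {T : ℚ⟦X⟧} (hT : T = 1 + 4 * X ^ 3 * T ^ 3) (n : ℕ) :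
    coeff (3 * n) T = 4 ^ n * (Nat.choose (3 * n) n : ℚ) / (2 * n + 1) := by
  induction n with
  | zero =>
    have h0 := congrArg (constantCoeff (R := ℚ)) hT
    simpa using h0
  | succ n ih =>
    have h := ternary_coeff_rec hT (3 * (n + 1))
    rw [if_pos (by omega), show 3 * (n + 1) - 3 = 3 * n by omega, ih] at h
    have hc : ((3 * (n + 1)).choose (n + 1) : ℚ) * (2 * (n + 1) * (2 * n + 1))
        = 3 * (3 * n + 1) * (3 * n + 2) * (3 * n).choose n := by
      rw [Nat.cast_choose ℚ (by omega), Nat.cast_choose ℚ (by omega),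
        show 3 * (n + 1) - (n + 1) = 2 * n + 1 + 1 by omega, show 3 * n - n = 2 * n by omega,
        show 3 * (n + 1) = 3 * n + 1 + 1 + 1 by omega]
      simp only [Nat.factorial_succ]
      have h1 := Nat.factorial_ne_zero n
      have h2 := Nat.factorial_ne_zero (2 * n)
      push_cast
      field_simp
      ring
    have e1 : (2 * n + 1 : ℚ) ≠ 0 := by positivity
    have e2 : (2 * (n + 1 : ℕ) + 1 : ℚ) ≠ 0 := by positivity
    have e3 : (n + 1 : ℚ) ≠ 0 := by positivity
    rw [eq_div_iff e2]
    push_cast at h ⊢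
    field_simp at h
    refine mul_left_cancel₀ (mul_ne_zero (mul_ne_zero e1 e3) (show (18 : ℚ) ≠ 0 by norm_num)) ?_
    linear_combination h - 36 * 4 ^ n * hc

lemma ternary_coeff_zero {T : ℚ⟦X⟧} (hT : T = 1 + 4 * X ^ 3 * T ^ 3) (m : ℕ) (hm : ¬ 3 ∣ m) :
    coeff m T = 0 := by
  induction m using Nat.strong_induction_on with
  | _ m ih =>
    have h := ternary_coeff_rec hT m
    have hz : 2 * (m : ℚ) * (2 * m + 3) * coeff m T = 0 := by
      rw [h]
      split_ifs with h3
      · rw [ih (m - 3) (by omega) (by omega), mul_zero]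
      · rfl
    have hm0 : (m : ℚ) ≠ 0 := by
      rintro h
      rw [Nat.cast_eq_zero] at h
      simp [h] at hm
    have : 2 * (m : ℚ) * (2 * m + 3) ≠ 0 := by positivity
    exact (mul_eq_zero.1 hz).resolve_left this

/-- Since `t G' = 3 (T² - T) / 2`, the combination `t G' + 3 G` is linear in `T`, which gives the
coefficients of `G` without computing those of `T²`. -/
lemma excursion_coeff {T G : ℚ⟦X⟧} (hT : T = 1 + 4 * X ^ 3 * T ^ 3) (hG : 2 * G = 3 * T - T ^ 2)
    (m : ℕ) :
    ((m : ℚ) + 3) * coeff m G = 3 * coeff m T := by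
  have h2 : d⁄dX ℚ (2 : ℚ⟦X⟧) = 0 := by
    simpa using (d⁄dX ℚ).map_natCast 2
  have h3 : d⁄dX ℚ (3 : ℚ⟦X⟧) = 0 := by
    simpa using (d⁄dX ℚ).map_natCast 3
  have h := congrArg (fun A : ℚ⟦X⟧ => X * d⁄dX ℚ A) hG
  simp only [Derivation.leibniz, map_sub, h2, h3, smul_eq_mul, pow_two] at h
  have hh : X * d⁄dX ℚ G + C 3 * G = C 3 * T := by
    refine mul_left_cancel₀ two_ne ?_
    simp only [map_ofNat]
    linear_combination h + theta_ternary hT + 3 * hG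
  have := congrArg (coeff m) hh
  rw [map_add, coeff_theta, coeff_C_mul, coeff_C_mul] at this
  linear_combination this

/-! ### Solution of the kernel equation -/

/-- The explicit candidate `r(x)` for the series of walks ending on an axis, with constant term `G`,
and the quadratic equation `x r = x + 2 t r - 2 t G + t² x² r²` it satisfies. Here `γ` is the
Catalan series in `t² T² x`. -/
lemma exists_boundary {T G : ℚ⟦X⟧} (hT : T = 1 + 4 * X ^ 3 * T ^ 3) (hG : 2 * G = 3 * T - T ^ 2) :
    ∃ r : ℚ⟦X⟧⟦X⟧, constantCoeff r = G ∧
      X * r = X + 2 * C X * r - 2 * C X * C G + C X ^ 2 * X ^ 2 * r ^ 2 := by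
  obtain ⟨γ, hγ⟩ := exists_quadratic (X ^ 2 * T ^ 2 : ℚ⟦X⟧)
  have hT' := congrArg (C (R := ℚ⟦X⟧)) hT
  have hG' := congrArg (C (R := ℚ⟦X⟧)) hG
  simp only [map_add, map_mul, map_sub, map_pow, map_one, map_ofNat] at hT' hG' hγ
  have h0 : constantCoeff γ = 1 := by
    have := congrArg (constantCoeff (R := ℚ⟦X⟧)) hγ
    simpa using this
  refine ⟨C T * γ - 2 * C X ^ 3 * C T ^ 4 * γ ^ 2, ?_, ?_⟩
  · simp [h0, map_ofNat]
    refine mul_left_cancel₀ two_ne ?_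
    linear_combination T * hT - hG
  · generalize C T = T at *
    generalize (C X : ℚ⟦X⟧⟦X⟧) = t at *
    generalize C G = G at *
    generalize (X : ℚ⟦X⟧⟦X⟧) = x at *
    linear_combination t * hG' + (-t * T + x * γ * (1 - 2 * t ^ 3 * T ^ 3 * γ)) * hT' +
      (-2 * t * T * (1 - 2 * t ^ 3 * T ^ 3 * (γ + 1)) + x * (1 - 2 * t ^ 3 * T ^ 3 * γ) ^ 2) * hγ

/-- For `r = ∑ rₖ xᵏ`, the symmetric series `∑ r_{i+j} xⁱ yʲ = (x r(x) - y r(y)) / (x - y)`.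
In `ℚ⟦X⟧⟦X⟧⟦X⟧` the innermost variable is `t`, the middle one `x` and the outermost one `y`; thus
`t = C (C X)`, `x = C X`, `y = X`, while `r(x) = C r` and `r(y) = map C r`. -/
def twoVar (r : ℚ⟦X⟧⟦X⟧) : ℚ⟦X⟧⟦X⟧⟦X⟧ :=
  PowerSeries.mk fun j => PowerSeries.mk fun i => coeff (i + j) r

lemma sub_mul_twoVar (r : ℚ⟦X⟧⟦X⟧) :
    (C X - X) * twoVar r = C (X * r) - X * PowerSeries.map C r := by
  ext1 j
  ext1 i
  rw [sub_mul, map_sub, map_sub, map_sub, map_sub, coeff_C_mul, coeff_C]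
  cases i <;> cases j <;> simp [twoVar, coeff_succ_X_mul, coeff_C, coeff_zero_X_mul, add_assoc, add_comm 1]

/-- The kernel equation `(x y - t (x + y + x² y²)) Q = x y - t x r(x) - t y r(y)` is solved by
`Q = P / (1 - t x y P)` with `P = twoVar r`. After multiplication by `x - y` it becomes a
polynomial identity modulo the quadratic equations of `r(x)` and `r(y)`. -/
lemma exists_kernel {r : ℚ⟦X⟧⟦X⟧} {G : ℚ⟦X⟧} (hr : constantCoeff r = G)
    (h : X * r = X + 2 * C X * r - 2 * C X * C G + C X ^ 2 * X ^ 2 * r ^ 2) :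
    ∃ Q : ℚ⟦X⟧⟦X⟧⟦X⟧, constantCoeff (constantCoeff Q) = G ∧
      (C X * X - C (C X) * (C X + X + C X ^ 2 * X ^ 2)) * Q =
        C X * X - C (C X) * C (X * r) - C (C X) * (X * PowerSeries.map C r) := by
  have hu : IsUnit (1 - C (C X) * C X * X * twoVar r) := by
    rw [PowerSeries.isUnit_iff_constantCoeff]
    simp
  obtain ⟨u, hu⟩ := hu
  have hP := sub_mul_twoVar r
  have ha := congrArg (C (R := ℚ⟦X⟧⟦X⟧)) h
  have hb := congrArg (PowerSeries.map (C (R := ℚ⟦X⟧))) h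
  simp only [map_add, map_mul, map_sub, map_pow, map_ofNat, PowerSeries.map_X,
    PowerSeries.map_C] at ha hb hP ⊢
  refine ⟨↑u⁻¹ * twoVar r, ?_, ?_⟩
  · have hQ : (1 - C (C X) * C X * X * twoVar r) * ((↑u⁻¹ : ℚ⟦X⟧⟦X⟧⟦X⟧) * twoVar r) = twoVar r := by
      rw [← hu, Units.mul_inv_cancel_left]
    have h0 := congrArg (fun A => constantCoeff (constantCoeff A)) hQ
    simpa [twoVar, hr, -Units.mul_inv_cancel_left] using h0
  · rw [mul_left_comm, Units.inv_mul_eq_iff_eq_mul, hu]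
    have hne : (C X - X : ℚ⟦X⟧⟦X⟧⟦X⟧) ≠ 0 := by
      intro h
      have := congrArg (coeff 1) h
      simp at this
    refine mul_left_cancel₀ hne ?_
    -- From here on only commutative ring identities in `t`, `x`, `y`, `r(x)`, `r(y)`, `P`, `G` matter.
    generalize twoVar r = P at *
    generalize PowerSeries.map C r = b at *
    generalize C r = a at *
    generalize (C (C X) : ℚ⟦X⟧⟦X⟧⟦X⟧) = t at *
    generalize (C (C G) : ℚ⟦X⟧⟦X⟧⟦X⟧) = g at *
    generalize (C X : ℚ⟦X⟧⟦X⟧⟦X⟧) = x at *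
    generalize (X : ℚ⟦X⟧⟦X⟧⟦X⟧) = y at *
    linear_combination (x * y - t * (x + y + x ^ 2 * y ^ 2) +
      t * x * y * (x * y - t * (x * a) - t * (y * b))) * hP + x * y * ha - x * y * hb

/-- Comparing coefficients of `x^(i+1) y^(j+1)` in the kernel equation, the boundary terms
disappear and the recurrence of Kreweras walks remains. -/
lemma kernel_coeff {r : ℚ⟦X⟧⟦X⟧}  {Q : ℚ⟦X⟧⟦X⟧⟦X⟧}
    (h : (C X * X - C (C X) * (C X + X + C X ^ 2 * X ^ 2)) * Q =
        C X * X - C (C X) * C (X * r) - C (C X) * (X * PowerSeries.map C r)) (i j : ℕ) :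
    coeff i (coeff j Q) = (if i = 0 ∧ j = 0 then 1 else 0) + X * (coeff (i + 1) (coeff j Q) +
      coeff i (coeff (j + 1) Q) + if 0 < i ∧ 0 < j then coeff (i - 1) (coeff (j - 1) Q) else 0) := by
  have h' : X * (C X * Q) - C (C X) * (C X * Q) - C (C X) * (X * Q)
      - C (C X) * (X ^ 2 * (C (X ^ 2) * Q)) =
      X * C X - C (C X) * C (X * r) - C (C X) * (X * PowerSeries.map C r) := by
    rw [map_pow]
    linear_combination h
  have := congrArg (fun A => coeff (i + 1) (coeff (j + 1) A)) h'
  simp only [map_sub, coeff_succ_X_mul, coeff_C_mul, coeff_C, coeff_X_pow_mul', PowerSeries.coeff_map] at this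
  cases i <;> cases j <;> simp [coeff_X_pow_mul', coeff_X] at this ⊢ <;> linear_combination this

/-- Both sides satisfy the same recurrence and initial condition in the length `n`. -/
lemma f_eq_coeff {Q : ℚ⟦X⟧⟦X⟧⟦X⟧}
    (h : ∀ i j : ℕ, coeff i (coeff j Q) = (if i = 0 ∧ j = 0 then 1 else 0) +
      X * (coeff (i + 1) (coeff j Q) + coeff i (coeff (j + 1) Q) +
        if 0 < i ∧ 0 < j then coeff (i - 1) (coeff (j - 1) Q) else 0)) (n : ℕ) :
    ∀ i j : ℕ, (f n i j : ℚ) = coeff n (coeff i (coeff j Q)) := by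
  induction n with
  | zero =>
    intro i j
    rw [h i j, f_zero]
    by_cases hij : i = 0 ∧ j = 0 <;> simp [hij]
  | succ n ih =>
    intro i j
    have h1 : coeff (n + 1) (if i = 0 ∧ j = 0 then 1 else 0 : ℚ⟦X⟧) = 0 := by
      split_ifs <;> simp [coeff_one]
    rw [h i j, f_succ n (Int.natCast_nonneg i) (Int.natCast_nonneg j), map_add, h1, zero_add,
      coeff_succ_X_mul, map_add, map_add, ← ih, ← ih]
    have h2 : (f n ((i : ℤ) - 1) ((j : ℤ) - 1) : ℚ) =
        coeff n (if 0 < i ∧ 0 < j then coeff (i - 1) (coeff (j - 1) Q) else 0) := by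
      split_ifs with hij
      · rw [← ih, Nat.cast_sub hij.1, Nat.cast_sub hij.2, Nat.cast_one]
      · rw [f_of_neg n (by omega), map_zero, Nat.cast_zero]
    push_cast
    rw [h2]

end Series

/-- Closed form for the Kreweras excursion numbers:
`f(3n;0,0) = 4ⁿ·C(3n,n)/((n+1)(2n+1))`, and `f(m;0,0) = 0` when `3 ∤ m`. -/
theorem kreweras_excursions_closed_form :
    (∀ n : ℕ, (f (3 * n) 0 0 : ℚ)
        = 4 ^ n * (Nat.choose (3 * n) n : ℚ) / ((n + 1) * (2 * n + 1))) ∧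
    ∀ m : ℕ, ¬ (3 ∣ m) → f m 0 0 = 0 := by
  obtain ⟨T, hT⟩ := exists_ternary
  obtain ⟨G, hG⟩ : ∃ G : PowerSeries ℚ, 2 * G = 3 * T - T ^ 2 := by
    refine ⟨PowerSeries.C (1 / 2 : ℚ) * (3 * T - T ^ 2), ?_⟩
    rw [← map_ofNat (PowerSeries.C (R := ℚ)) 2, ← mul_assoc, ← map_mul]
    norm_num
  obtain ⟨r, hr, hq⟩ := exists_boundary hT hG
  obtain ⟨Q, hQ, hker⟩ := exists_kernel hr hq
  have hf : ∀ n : ℕ, (f n 0 0 : ℚ) = PowerSeries.coeff n G := by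
    intro n
    have h := f_eq_coeff (kernel_coeff hker) n 0 0
    simpa [hQ] using h
  have hcoeff := excursion_coeff hT hG
  refine ⟨fun n => ?_, fun m hm => ?_⟩
  · have h := hcoeff (3 * n)
    rw [ternary_coeff hT] at h
    rw [hf]
    have e1 : (n + 1 : ℚ) ≠ 0 := by positivity
    have e2 : (2 * n + 1 : ℚ) ≠ 0 := by positivity
    push_cast at h
    field_simp at h ⊢
    linear_combination h
  · have h := hcoeff m
    rw [ternary_coeff_zero hT m hm, mul_zero, ← hf] at h
    have e1 : (m + 3 : ℚ) ≠ 0 := by positivity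
    exact_mod_cast (mul_eq_zero.1 h).resolve_left e1
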